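/- arXiv:1202.4803 — 2 statements merged into one kernel-verified Lean document; each statement's English description precedes it below -/
import Mathlib

section
/- Let 𝒜 be a hereditary abelian category and 𝒩 a narrow subcategory of 𝒜. Let f : X → Y be a morphism between objects of 𝒩 with kernel K. Then for any object X′ ∈ 𝒩 and any morphism g : K → X′, the cokernel of g lies in 𝒩. -/
/-!
STATEMENT 3: Let 𝒜 be a hereditary abelian category and 𝒩 a narrow subcategory of 𝒜.
Let `f : X ⟶ Y` be a morphism between objects of 𝒩 with kernel `K`.  Then for any object
`X' ∈ 𝒩` and any morphism `g : K ⟶ X'`, the cokernel of `g` lies in 𝒩.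
-/

open CategoryTheory CategoryTheory.Limits

universe w v u

variable {𝒜 : Type u} [Category.{v} 𝒜] [Abelian 𝒜]

/-- A subcategory (given by its set of objects) is replete, i.e. closed under isomorphisms. -/
def Replete (N : Set 𝒜) : Prop := ∀ ⦃X Y : 𝒜⦄, X ∈ N → (X ≅ Y) → Y ∈ N

/-- A subcategory is closed under extensions if for every short exact sequence
`0 → X₁ → X₂ → X₃ → 0` with `X₁` and `X₃` in it, `X₂` is in it. -/
def ClosedUnderExtensions (N : Set 𝒜) : Prop :=
  ∀ S : ShortComplex 𝒜, S.ShortExact → S.X₁ ∈ N → S.X₃ ∈ N → S.X₂ ∈ N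

/-- A subcategory is closed under cokernels if the cokernel of any map between its objects
belongs to it. -/
def ClosedUnderCokernels (N : Set 𝒜) : Prop :=
  ∀ ⦃X Y : 𝒜⦄ (f : X ⟶ Y), X ∈ N → Y ∈ N → cokernel f ∈ N

/-- A subcategory is closed under kernels if the kernel of any map between its objects
belongs to it. -/
def ClosedUnderKernels (N : Set 𝒜) : Prop :=
  ∀ ⦃X Y : 𝒜⦄ (f : X ⟶ Y), X ∈ N → Y ∈ N → kernel f ∈ N

/-- A narrow subcategory: a (replete) full subcategory closed under extensions and cokernels. -/
def IsNarrow (N : Set 𝒜) : Prop :=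
  Replete N ∧ ClosedUnderExtensions N ∧ ClosedUnderCokernels N

variable [HasExt.{w} 𝒜]

/-- An abelian category is hereditary if `Ext²(A, B) = 0` for all objects `A`, `B`
(equivalently, it has global dimension at most one). -/
def Hereditary : Prop := ∀ ⦃X Y : 𝒜⦄ (e : Abelian.Ext X Y 2), e = 0

/-!
The class `θ` of `0 ⟶ ker f ⟶ X ⟶ Y ⟶ coker f ⟶ 0` in `Ext²` is the image, under the connecting
map of `0 ⟶ ker f ⟶ X ⟶ im f ⟶ 0`, of the class of `0 ⟶ im f ⟶ Y ⟶ coker f ⟶ 0` in `Ext¹`. When `θ`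
vanishes, as it does in a hereditary category, the latter lifts to an extension
`0 ⟶ X ⟶ E ⟶ coker f ⟶ 0`, whose pushout along `X ⟶ im f` is `Y`. The pushout square is a short
exact sequence `0 ⟶ X ⟶ E ⊞ im f ⟶ Y ⟶ 0`, so `im f` is a summand of an object of the narrow
subcategory `N`, hence the cokernel of an endomorphism of that object, hence in `N`. Finally the
pushout `P` of `X` along `g : ker f ⟶ X'` is an extension of `im f` by `X'`, and `coker g` is the
cokernel of `X ⟶ P`.
-/

section Pretriangulated

open Pretriangulated

theorem distinguished_of_iso_obj₂ {T : Type u} [Category.{v} T] [Preadditive T] [HasZeroObject T]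
    [HasShift T ℤ] [∀ n : ℤ, (shiftFunctor T n).Additive] [Pretriangulated T]
    {A B E E' : T} {i : B ⟶ E} {q : E ⟶ A} {δ : A ⟶ B⟦(1 : ℤ)⟧}
    (hT : Triangle.mk i q δ ∈ distTriang T) (e : E ≅ E') :
    Triangle.mk (i ≫ e.hom) (e.inv ≫ q) δ ∈ distTriang T :=
  isomorphic_distinguished _ hT _ (Triangle.isoMk _ _ (Iso.refl B) e.symm (Iso.refl A)
    (show (i ≫ e.hom) ≫ e.inv = 𝟙 B ≫ i by simp)
    (show (e.inv ≫ q) ≫ 𝟙 A = e.inv ≫ q by simp)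
    (show δ ≫ (𝟙 B)⟦(1 : ℤ)⟧' = 𝟙 A ≫ δ by simp))

end Pretriangulated

section DerivedCategory

open DerivedCategory Pretriangulated Triangulated

variable {C : Type u} [Category.{v} C] [Abelian C] [HasDerivedCategory.{w} C]

theorem singleFunctor_hom_shift_eq_zero_of_neg {X Y : C} {n : ℤ}
    (φ : (singleFunctor C 0).obj X ⟶ ((singleFunctor C 0).obj Y)⟦n⟧) (hn : n < 0) : φ = 0 :=
  have := TStructure.t.isGE_shift ((singleFunctor C 0).obj Y) 0 n (-n)
  TStructure.t.zero φ 0 (-n)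

theorem shortExact_of_singleFunctor_triangle {S : ShortComplex C}
    {δ : (singleFunctor C 0).obj S.X₃ ⟶ ((singleFunctor C 0).obj S.X₁)⟦(1 : ℤ)⟧}
    (hδ : Triangle.mk ((singleFunctor C 0).map S.f) ((singleFunctor C 0).map S.g) δ ∈
      distTriang _) :
    S.ShortExact := by
  have hker := AbelianSubcategory.isLimitKernelForkOfDistTriang
    (fun _ _ _ ↦ singleFunctor_hom_shift_eq_zero_of_neg) S.f S.g δ hδ
  have hcoker := AbelianSubcategory.isColimitCokernelCoforkOfDistTriang
    (fun _ _ _ ↦ singleFunctor_hom_shift_eq_zero_of_neg) S.f S.g δ hδ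
  exact .mk' (S.exact_of_f_is_kernel hker) (Fork.IsLimit.mono hker) (Cofork.IsColimit.epi hcoker)

theorem exists_iso_singleFunctor_obj_of_distTriang {A B : C} {E : DerivedCategory C}
    {i : (singleFunctor C 0).obj B ⟶ E} {q : E ⟶ (singleFunctor C 0).obj A}
    {δ : (singleFunctor C 0).obj A ⟶ ((singleFunctor C 0).obj B)⟦(1 : ℤ)⟧}
    (hδ : Triangle.mk i q δ ∈ distTriang _) :
    ∃ E' : C, Nonempty (E ≅ (singleFunctor C 0).obj E') := by
  have : E.IsLE 0 := TStructure.t.isLE₂ _ hδ 0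
    (inferInstanceAs (IsLE ((singleFunctor C 0).obj B) 0))
    (inferInstanceAs (IsLE ((singleFunctor C 0).obj A) 0))
  have : E.IsGE 0 := TStructure.t.isGE₂ _ hδ 0
    (inferInstanceAs (IsGE ((singleFunctor C 0).obj B) 0))
    (inferInstanceAs (IsGE ((singleFunctor C 0).obj A) 0))
  exact E.exists_iso_singleFunctor_obj_of_isGE_of_isLE 0

theorem singleδ_eq_of_singleFunctor_triangle {S : ShortComplex C} (hS : S.ShortExact)
    {δ : (singleFunctor C 0).obj S.X₃ ⟶ ((singleFunctor C 0).obj S.X₁)⟦(1 : ℤ)⟧}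
    (hδ : Triangle.mk ((singleFunctor C 0).map S.f) ((singleFunctor C 0).map S.g) δ ∈
      distTriang _) :
    hS.singleδ = δ := by
  obtain ⟨(c' : (singleFunctor C 0).obj S.X₃ ⟶ (singleFunctor C 0).obj S.X₃),
    (hgc' : (singleFunctor C 0).map S.g ≫ c' = 𝟙 _ ≫ (singleFunctor C 0).map S.g),
    (hδc' : hS.singleδ ≫ (𝟙 ((singleFunctor C 0).obj S.X₁))⟦(1 : ℤ)⟧' = c' ≫ δ)⟩ :=
    complete_distinguished_triangle_morphism _ _ hS.singleTriangle_distinguished hδ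
      (𝟙 _) (𝟙 _) ((Category.comp_id _).trans (Category.id_comp _).symm)
  obtain ⟨c, rfl⟩ := (singleFunctor C 0).map_surjective c'
  have := hS.epi_g
  obtain rfl : c = 𝟙 _ :=
    (cancel_epi S.g).1 ((singleFunctor C 0).map_injective (by simpa using hgc'))
  simpa using hδc'

theorem exists_distTriang_singleFunctor {A B : C}
    (δ : (singleFunctor C 0).obj A ⟶ ((singleFunctor C 0).obj B)⟦(1 : ℤ)⟧) :
    ∃ (E : C) (i : B ⟶ E) (q : E ⟶ A),
      Triangle.mk ((singleFunctor C 0).map i) ((singleFunctor C 0).map q) δ ∈ distTriang _ := by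
  obtain ⟨E', i', q', hT⟩ := distinguished_cocone_triangle₂ δ
  obtain ⟨E, ⟨e⟩⟩ := exists_iso_singleFunctor_obj_of_distTriang hT
  obtain ⟨i, hi⟩ := (singleFunctor C 0).map_surjective (i' ≫ e.hom)
  obtain ⟨q, hq⟩ := (singleFunctor C 0).map_surjective (e.inv ≫ q')
  refine ⟨E, i, q, ?_⟩
  rw [hi, hq]
  exact distinguished_of_iso_obj₂ hT e

end DerivedCategory

section Ext

open Abelian DerivedCategory Pretriangulated

theorem exists_shortExact_extClass_eq {A B : 𝒜} (α : Ext A B 1) :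
    ∃ (E : 𝒜) (i : B ⟶ E) (q : E ⟶ A) (w : i ≫ q = 0)
      (h : (ShortComplex.mk i q w).ShortExact), h.extClass = α := by
  let := HasDerivedCategory.standard 𝒜
  obtain ⟨E, i, q, hT⟩ := exists_distTriang_singleFunctor α.hom
  have w : i ≫ q = 0 := (singleFunctor 𝒜 0).map_injective
    (by simpa using! comp_distTriang_mor_zero₁₂ _ hT)
  have h : (ShortComplex.mk i q w).ShortExact := shortExact_of_singleFunctor_triangle hT
  refine ⟨E, i, q, w, h, ?_⟩
  ext
  exact h.extClass_hom.trans (singleδ_eq_of_singleFunctor_triangle h hT)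

theorem exists_hom_of_extClass_comp_eq {S₁ S₂ : ShortComplex 𝒜} (h₁ : S₁.ShortExact)
    (h₂ : S₂.ShortExact) (a : S₁.X₁ ⟶ S₂.X₁) (c : S₁.X₃ ⟶ S₂.X₃)
    (h : h₁.extClass.comp (Ext.mk₀ a) (add_zero 1) = (Ext.mk₀ c).comp h₂.extClass (zero_add 1)) :
    ∃ φ : S₁ ⟶ S₂, φ.τ₁ = a ∧ φ.τ₃ = c := by
  let := HasDerivedCategory.standard 𝒜
  have hδ : h₁.singleδ ≫ ((singleFunctor 𝒜 0).map a)⟦(1 : ℤ)⟧' =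
      (singleFunctor 𝒜 0).map c ≫ h₂.singleδ := by
    simpa [ShiftedHom.comp_mk₀, ShiftedHom.mk₀_comp] using congr_arg Ext.hom h
  obtain ⟨b', hab', hbc'⟩ := complete_distinguished_triangle_morphism₂ _ _
    h₁.singleTriangle_distinguished h₂.singleTriangle_distinguished _ _ hδ
  obtain ⟨b, rfl⟩ := (singleFunctor 𝒜 0).map_surjective b'
  exact ⟨{ τ₁ := a, τ₂ := b, τ₃ := c
           comm₁₂ := (singleFunctor 𝒜 0).map_injective (by simpa using! hab'.symm)
           comm₂₃ := (singleFunctor 𝒜 0).map_injective (by simpa using! hbc'.symm) }, rfl, rfl⟩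

theorem nonempty_iso_of_extClass_eq {A B E₁ E₂ : 𝒜} {i₁ : B ⟶ E₁} {q₁ : E₁ ⟶ A}
    {w₁ : i₁ ≫ q₁ = 0} {i₂ : B ⟶ E₂} {q₂ : E₂ ⟶ A} {w₂ : i₂ ≫ q₂ = 0}
    (h₁ : (ShortComplex.mk i₁ q₁ w₁).ShortExact) (h₂ : (ShortComplex.mk i₂ q₂ w₂).ShortExact)
    (h : h₁.extClass = h₂.extClass) : Nonempty (E₁ ≅ E₂) := by
  obtain ⟨φ, hφ₁, hφ₃⟩ := exists_hom_of_extClass_comp_eq h₁ h₂ (𝟙 B) (𝟙 A) (by simpa using h)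
  have : IsIso φ.τ₁ := hφ₁ ▸ inferInstanceAs (IsIso (𝟙 B))
  have : IsIso φ.τ₃ := hφ₃ ▸ inferInstanceAs (IsIso (𝟙 A))
  have := ShortComplex.isIso₂_of_shortExact_of_isIso₁₃ φ h₁ h₂
  exact ⟨asIso φ.τ₂⟩

end Ext

section ShortComplex

variable {C : Type u} [Category.{v} C] [Abelian C]

/-- The pushout `0 ⟶ B ⟶ P ⟶ S.X₃ ⟶ 0` of an extension `S` along `u : S.X₁ ⟶ B`. -/
noncomputable abbrev pushoutExtension (S : ShortComplex C) {B : C} (u : S.X₁ ⟶ B) :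
    ShortComplex C :=
  .mk (pushout.inr S.f u) (pushout.desc S.g 0 (by simp)) (pushout.inr_desc _ _ _)

/-- The canonical morphism from an extension to its pushout along `u`. -/
noncomputable abbrev toPushoutExtension (S : ShortComplex C) {B : C} (u : S.X₁ ⟶ B) :
    S ⟶ pushoutExtension S u where
  τ₁ := u
  τ₂ := pushout.inl S.f u
  τ₃ := 𝟙 S.X₃
  comm₁₂ := pushout.condition.symm
  comm₂₃ := (pushout.inl_desc _ _ _).trans (Category.comp_id _).symm

theorem pushoutExtension_shortExact {S : ShortComplex C} (hS : S.ShortExact) {B : C}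
    (u : S.X₁ ⟶ B) : (pushoutExtension S u).ShortExact := by
  have := hS.mono_f
  have := hS.epi_g
  have hmono : Mono (pushout.inr S.f u) := inferInstance
  have hepi : Epi (pushoutExtension S u).g := epi_of_epi_fac (pushout.inl_desc _ _ _)
  refine .mk' (ShortComplex.exact_of_g_is_cokernel _ ?_) hmono hepi
  refine CokernelCofork.IsColimit.ofπ' _ _ fun {T} k hk ↦ ?_
  have hk : pushout.inr S.f u ≫ k = 0 := hk
  have hinl : S.f ≫ pushout.inl S.f u ≫ k = 0 := by
    rw [pushout.condition_assoc, hk, comp_zero]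
  refine ⟨hS.exact.desc (pushout.inl S.f u ≫ k) hinl, pushout.hom_ext ?_ ?_⟩
  · rw [pushout.inl_desc_assoc, hS.exact.g_desc]
  · rw [pushout.inr_desc_assoc, zero_comp, hk]

/-- The short complex `0 ⟶ ker f ⟶ X ⟶ im f ⟶ 0`. -/
noncomputable abbrev kernelImageShortComplex {X Y : C} (f : X ⟶ Y) : ShortComplex C :=
  .mk (kernel.ι f) (Abelian.factorThruImage f) (by simp [← cancel_mono (Abelian.image.ι f)])

theorem kernelImageShortComplex_shortExact {X Y : C} (f : X ⟶ Y) :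
    (kernelImageShortComplex f).ShortExact :=
  .mk' (ShortComplex.exact_of_f_is_kernel _ (isKernelOfComp (Abelian.image.ι f) f
    (kernelIsKernel f) _ (Abelian.image.fac f)))
    (inferInstanceAs (Mono (kernel.ι f))) (inferInstanceAs (Epi (Abelian.factorThruImage f)))

/-- The short complex `0 ⟶ im f ⟶ Y ⟶ coker f ⟶ 0`. -/
noncomputable abbrev imageCokernelShortComplex {X Y : C} (f : X ⟶ Y) : ShortComplex C :=
  .mk (Abelian.image.ι f) (cokernel.π f) (kernel.condition _)

theorem imageCokernelShortComplex_shortExact {X Y : C} (f : X ⟶ Y) :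
    (imageCokernelShortComplex f).ShortExact :=
  .mk' (ShortComplex.exact_kernel _) (inferInstanceAs (Mono (Abelian.image.ι f)))
    (inferInstanceAs (Epi (cokernel.π f)))

end ShortComplex

section IsNarrow

variable {C : Type u} [Category.{v} C] [Abelian C]

theorem IsNarrow.mem_of_biprod_mem {N : Set C} (hN : IsNarrow N) {A B : C} (h : (A ⊞ B) ∈ N) :
    B ∈ N :=
  hN.1 (hN.2.2 (biprod.fst ≫ biprod.inl : A ⊞ B ⟶ A ⊞ B) h h)
    (cokernelEpiComp _ _ ≪≫ cokernelBiprodInlIso)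

theorem IsNarrow.mem_of_pushout_mem {N : Set C} (hN : IsNarrow N) {X E I : C} (i : X ⟶ E) [Mono i]
    (p : X ⟶ I) (hX : X ∈ N) (hP : pushout i p ∈ N) : I ∈ N := by
  have sq := IsPushout.of_hasPushout i p
  have hmono : Mono (biprod.lift i (-p)) := mono_of_mono_fac (biprod.lift_fst _ _)
  have hsq : sq.shortComplex.ShortExact := .mk' sq.exact_shortComplex hmono sq.epi_shortComplex_g
  exact hN.mem_of_biprod_mem (hN.2.1 _ hsq hX hP)

theorem IsNarrow.cokernel_mem_of_pushout_mem {N : Set C} (hN : IsNarrow N) {K X X' : C}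
    (i : K ⟶ X) (g : K ⟶ X') (hX : X ∈ N) (hP : pushout i g ∈ N) : cokernel g ∈ N := by
  have sq := (IsPushout.of_hasPushout i g).flip
  have := isIso_cokernel_map_of_isPushout sq
  exact hN.1 (hN.2.2 (pushout.inl i g) hX hP) (asIso (cokernel.map _ _ _ _ sq.w)).symm

end IsNarrow

section KernelCokernelExt

open Abelian

theorem extClass_comp_mk₀_eq_pushoutExtension_extClass {S : ShortComplex 𝒜} (hS : S.ShortExact)
    {B : 𝒜} (u : S.X₁ ⟶ B) :
    hS.extClass.comp (Ext.mk₀ u) (add_zero 1) = (pushoutExtension_shortExact hS u).extClass := by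
  simpa using hS.extClass_naturality (pushoutExtension_shortExact hS u) (toPushoutExtension S u)

/-- The Yoneda class in `Ext²` of the exact sequence `0 ⟶ ker f ⟶ X ⟶ Y ⟶ coker f ⟶ 0`, encoded as
the product of the classes of the two short exact sequences through the image of `f`. -/
noncomputable def kernelCokernelExt {X Y : 𝒜} (f : X ⟶ Y) : Ext (cokernel f) (kernel f) 2 :=
  (imageCokernelShortComplex_shortExact f).extClass.comp
    (kernelImageShortComplex_shortExact f).extClass one_add_one_eq_two

theorem exists_pushout_iso_of_kernelCokernelExt_eq_zero {X Y : 𝒜} (f : X ⟶ Y)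
    (hf : kernelCokernelExt f = 0) :
    ∃ (E : 𝒜) (i : X ⟶ E), Mono i ∧ Nonempty (Y ≅ pushout i (Abelian.factorThruImage f)) := by
  obtain ⟨x, hx⟩ : ∃ x : Ext (cokernel f) X 1,
      x.comp (Ext.mk₀ (Abelian.factorThruImage f)) (add_zero 1) =
        (imageCokernelShortComplex_shortExact f).extClass :=
    Ext.covariant_sequence_exact₃ _ (kernelImageShortComplex_shortExact f) _ one_add_one_eq_two hf
  obtain ⟨E, i, q, w, hE, rfl⟩ := exists_shortExact_extClass_eq x
  rw [extClass_comp_mk₀_eq_pushoutExtension_extClass] at hx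
  exact ⟨E, i, hE.mono_f, nonempty_iso_of_extClass_eq _ _ hx.symm⟩

theorem IsNarrow.image_mem_of_kernelCokernelExt_eq_zero {N : Set 𝒜} (hN : IsNarrow N) {X Y : 𝒜}
    (f : X ⟶ Y) (hf : kernelCokernelExt f = 0) (hX : X ∈ N) (hY : Y ∈ N) :
    Abelian.image f ∈ N := by
  obtain ⟨E, i, _, ⟨e⟩⟩ := exists_pushout_iso_of_kernelCokernelExt_eq_zero f hf
  exact hN.mem_of_pushout_mem i _ hX (hN.1 hY e)

theorem cokernel_of_map_from_kernel_mem_narrow_general {N : Set 𝒜} (hN : IsNarrow N) {X Y : 𝒜}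
    (f : X ⟶ Y) (hf : kernelCokernelExt f = 0) (hX : X ∈ N) (hY : Y ∈ N) {X' : 𝒜} (hX' : X' ∈ N)
    (g : kernel f ⟶ X') : cokernel g ∈ N := by
  have hI : Abelian.image f ∈ N := hN.image_mem_of_kernelCokernelExt_eq_zero f hf hX hY
  have hP : pushout (kernel.ι f) g ∈ N :=
    hN.2.1 _ (pushoutExtension_shortExact (kernelImageShortComplex_shortExact f) g) hX' hI
  exact hN.cokernel_mem_of_pushout_mem (kernel.ι f) g hX hP

end KernelCokernelExt

theorem cokernel_of_map_from_kernel_mem_narrow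
    (hher : Hereditary (𝒜 := 𝒜)) (𝒩 : Set 𝒜) (h𝒩 : IsNarrow 𝒩)
    {X Y : 𝒜} (f : X ⟶ Y) (hX : X ∈ 𝒩) (hY : Y ∈ 𝒩)
    {X' : 𝒜} (hX' : X' ∈ 𝒩) (g : kernel f ⟶ X') :
    cokernel g ∈ 𝒩 :=
  cokernel_of_map_from_kernel_mem_narrow_general h𝒩 f (hher _) hX hY hX' g
end

section
/- Let 𝒜 be a hereditary abelian category. A full subcategory 𝒩 ⊆ 𝒜 is a narrow subcategory if and only if 𝒩 is a tilting nullity class in its wide closure wide(𝒩), i.e. 𝒩 is closed under quotient objects and extensions inside the abelian category wide(𝒩), and every object of wide(𝒩) admits a monomorphism into an object of 𝒩. -/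
/-!
STATEMENT 5: Let 𝒜 be a hereditary abelian category.  A (replete) full subcategory 𝒩 ⊆ 𝒜 is
narrow (closed under extensions and cokernels) if and only if 𝒩 is a tilting nullity class
in its wide closure wide(𝒩), i.e.:
* 𝒩 is closed under quotient objects inside wide(𝒩),
* 𝒩 is closed under extensions inside wide(𝒩), and
* every object of wide(𝒩) admits a monomorphism into an object of 𝒩.
-/

open CategoryTheory CategoryTheory.Limits

universe w v u

variable {𝒜 : Type u} [Category.{v} 𝒜] [Abelian 𝒜]

/-- A wide subcategory: a (replete) full subcategory closed under kernels, cokernels and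
extensions. -/
def IsWide (W : Set 𝒜) : Prop :=
  Replete W ∧ ClosedUnderKernels W ∧ ClosedUnderCokernels W ∧ ClosedUnderExtensions W

/-- The wide closure of a subcategory: the smallest wide subcategory containing it. -/
def wideClosure (N : Set 𝒜) : Set 𝒜 :=
  {X | ∀ W : Set 𝒜, IsWide W → N ⊆ W → X ∈ W}

variable [HasExt.{w} 𝒜]

/-!
Let `𝒩` be narrow and let `W` consist of the kernels of epimorphisms between objects of `𝒩`, so
that every object of `W` embeds into one of `𝒩`. Once `W` is known to be wide, it contains
`wide(𝒩)`, and the theorem reduces to the closure of `𝒩` under images of its morphisms.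

Heredity is used through one statement only: an epimorphism `p : X ⟶ I` and a monomorphism
`ι : I ⟶ Y` fit into a pushout square `X ⟶ E ⟶ Y` with `X ⟶ E` mono, because the class of `ι` in
`Ext¹(coker ι, I)` lifts along `p` to `Ext¹(coker ι, X)`, the obstruction lying in
`Ext²(coker ι, ker p) = 0`. When `X` and `Y` are in `𝒩`, so are `E`, an extension of `coker ι` by
`X`, and `E ⊞ I`, an extension of `Y` by `X`; hence `I`, the cokernel of `E ⟶ E ⊞ I`, is in `𝒩`.
The same square, for `X₂ ⟶ X₃` and an embedding of `X₃` into an object of `𝒩`, shows that `W` is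
closed under extensions.
-/

section Pushouts

variable {C : Type u} [Category.{v} C] [Abelian C]

variable {X₁ X₂ X₃ X₄ : C} {t : X₁ ⟶ X₂} {l : X₁ ⟶ X₃} {r : X₂ ⟶ X₄} {b : X₃ ⟶ X₄}

theorem mono_of_isPushout_of_mono (sq : IsPushout t l r b) [Mono t] : Mono b :=
  MorphismProperty.of_isPushout (P := .monomorphisms C) sq.flip ‹Mono t›

/-- The isomorphism between the cokernels of opposite sides of a pushout square. -/
noncomputable def cokernelIsoOfIsPushout (sq : IsPushout t l r b) : cokernel t ≅ cokernel b :=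
  have := isIso_cokernel_map_of_isPushout sq
  asIso (cokernel.map _ _ _ _ sq.w)

theorem isIso_kernel_map_of_isPushout_of_mono (sq : IsPushout t l r b) [Mono t] :
    IsIso (kernel.map l r t b sq.w.symm) := by
  have : Epi (kernel.map l r t b sq.w.symm) := Abelian.epi_kernel_map_of_isPushout sq.flip
  have : Mono (kernel.map l r t b sq.w.symm) := inferInstance
  exact isIso_of_mono_of_epi _

theorem shortExact_shortComplex_of_isPushout (sq : IsPushout t l r b) [Mono t] :
    sq.shortComplex.ShortExact where
  exact := sq.exact_shortComplex
  mono_f :=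
    have : Mono (biprod.lift t (-l)) := mono_of_mono_fac (biprod.lift_fst t (-l))
    this
  epi_g := sq.epi_shortComplex_g

theorem isPushout_cokernel_comp {X Y Z : C} (h : X ⟶ Y) (j : Y ⟶ Z) :
    IsPushout j (cokernel.π h) (cokernel.π (h ≫ j))
      (cokernel.map h (h ≫ j) (𝟙 X) j (Category.id_comp _).symm) :=
  ⟨⟨by simp⟩, ⟨PushoutCocone.IsColimit.mk _
    (fun s ↦ cokernel.desc _ s.inl (by simp [s.condition]))
    (fun s ↦ by simp)
    (fun s ↦ by simp [← cancel_epi (cokernel.π h), s.condition])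
    (fun s m hm _ ↦ by simp [← cancel_epi (cokernel.π (h ≫ j)), hm])⟩⟩

theorem isPushout_of_isIso_cokernel_map (sq : CommSq t l r b) [Mono b]
    [IsIso (cokernel.map t b l r sq.w)] : IsPushout t l r b := by
  have sq' := IsPushout.of_hasPushout t l
  let k := pushout.desc r b sq.w
  have hr : pushout.inl t l ≫ k = r := pushout.inl_desc _ _ _
  have hb : pushout.inr t l ≫ k = b := pushout.inr_desc _ _ _
  have : Mono (pushout.inr t l) := mono_of_mono_fac hb
  let S₁ := ShortComplex.mk (pushout.inr t l) _ (cokernel.condition _)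
  let S₂ := ShortComplex.mk b _ (cokernel.condition _)
  have h₁ : S₁.ShortExact := { exact := ShortComplex.exact_cokernel _ }
  have h₂ : S₂.ShortExact := { exact := ShortComplex.exact_cokernel _ }
  let φ : S₁ ⟶ S₂ :=
    { τ₁ := 𝟙 X₃
      τ₂ := k
      τ₃ := cokernel.map (pushout.inr t l) b (𝟙 X₃) k (by simp [hb]) }
  have : IsIso φ.τ₁ := inferInstanceAs (IsIso (𝟙 X₃))
  have : IsIso φ.τ₃ := by
    have := isIso_cokernel_map_of_isPushout sq'
    have fac : cokernel.map _ _ _ _ sq'.w ≫ φ.τ₃ = cokernel.map t b l r sq.w := by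
      ext; simp [φ, reassoc_of% hr]
    have : IsIso (cokernel.map _ _ _ _ sq'.w ≫ φ.τ₃) := by rw [fac]; infer_instance
    exact IsIso.of_isIso_comp_left (cokernel.map _ _ _ _ sq'.w) _
  have : IsIso k := ShortComplex.isIso₂_of_shortExact_of_isIso₁₃ φ h₁ h₂
  exact sq'.of_iso (Iso.refl _) (Iso.refl _) (Iso.refl _) (asIso k) (by simp) (by simp)
    (by simp [hr]) (by simp [hb])

theorem isPushout_of_isIso_τ₃ {S S' : ShortComplex C} (hS : S.ShortExact) (hS' : S'.ShortExact)
    (φ : S ⟶ S') [IsIso φ.τ₃] : IsPushout S.f φ.τ₁ φ.τ₂ S'.f := by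
  have := hS'.mono_f
  have : IsIso (cokernel.map S.f S'.f φ.τ₁ φ.τ₂ φ.comm₁₂.symm) := by
    let e := IsColimit.coconePointUniqueUpToIso (cokernelIsCokernel S.f) hS.gIsCokernel
    let e' := IsColimit.coconePointUniqueUpToIso (cokernelIsCokernel S'.f) hS'.gIsCokernel
    have he : cokernel.π S.f ≫ e.hom = S.g :=
      IsColimit.comp_coconePointUniqueUpToIso_hom (cokernelIsCokernel S.f) _ .one
    have he' : cokernel.π S'.f ≫ e'.hom = S'.g :=
      IsColimit.comp_coconePointUniqueUpToIso_hom (cokernelIsCokernel S'.f) _ .one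
    have fac : cokernel.map S.f S'.f φ.τ₁ φ.τ₂ φ.comm₁₂.symm ≫ e'.hom = e.hom ≫ φ.τ₃ := by
      ext
      simp [he', reassoc_of% he, φ.comm₂₃]
    have : IsIso (cokernel.map S.f S'.f φ.τ₁ φ.τ₂ φ.comm₁₂.symm ≫ e'.hom) := by
      rw [fac]; infer_instance
    exact IsIso.of_isIso_comp_right _ e'.hom
  exact isPushout_of_isIso_cokernel_map ⟨φ.comm₁₂.symm⟩

end Pushouts

section Extensions

variable {C : Type u} [Category.{v} C] [Abelian C]

open DerivedCategory Pretriangulated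

section

variable [HasDerivedCategory.{w} C] {S : ShortComplex C}
  {δ : (singleFunctor C 0).obj S.X₃ ⟶ ((singleFunctor C 0).obj S.X₁)⟦(1 : ℤ)⟧}

theorem shortExact_of_singleFunctor_distinguished
    (hT : Triangle.mk ((singleFunctor C 0).map S.f) ((singleFunctor C 0).map S.g) δ ∈
      distTriang (DerivedCategory C)) : S.ShortExact := by
  let F := singleFunctor C 0 ⋙ homologyFunctor C 0
  have : F.Faithful := .of_iso (singleFunctorCompHomologyFunctorIso C 0).symm
  have hmono : Mono (F.map S.f) :=
    (HomologySequence.mono_homologyMap_mor₁_iff _ hT (-1) 0).2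
      ((isZero_of_isGE ((singleFunctor C 0).obj S.X₃) 0 (-1) (by lia)).eq_of_src _ _)
  have hepi : Epi (F.map S.g) :=
    (HomologySequence.epi_homologyMap_mor₂_iff _ hT 0 1).2
      ((isZero_of_isLE ((singleFunctor C 0).obj S.X₁) 0 1 (by lia)).eq_of_tgt _ _)
  have hF : (S.map F).ShortExact :=
    { exact := HomologySequence.exact₂ _ hT 0
      mono_f := hmono
      epi_g := hepi }
  exact ShortExact.reflects_shortExact_of_faithful F hF

theorem singleδ_eq_of_singleFunctor_distinguished (hS : S.ShortExact)
    (hT : Triangle.mk ((singleFunctor C 0).map S.f) ((singleFunctor C 0).map S.g) δ ∈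
      distTriang (DerivedCategory C)) : hS.singleδ = δ := by
  have := hS.epi_g
  obtain ⟨c, hgc, hδ⟩ := complete_distinguished_triangle_morphism _ _
    hS.singleTriangle_distinguished hT (𝟙 _) (𝟙 _)
    ((Category.comp_id _).trans (Category.id_comp ((singleFunctor C 0).map S.f)).symm)
  obtain ⟨c, rfl⟩ := (singleFunctor C 0).map_surjective c
  replace hgc : S.g ≫ c = S.g := (singleFunctor C 0).map_injective (by
    rw [Functor.map_comp]
    exact hgc.trans (Category.id_comp _))
  obtain rfl : c = 𝟙 S.X₃ := by rw [← cancel_epi S.g, hgc, Category.comp_id]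
  calc hS.singleδ = hS.singleδ ≫ (𝟙 ((singleFunctor C 0).obj S.X₁))⟦(1 : ℤ)⟧' := by simp
    _ = (singleFunctor C 0).map (𝟙 S.X₃) ≫ δ := hδ
    _ = δ := by simp

theorem exists_singleFunctor_distinguished {X Y : C}
    (δ : (singleFunctor C 0).obj X ⟶ ((singleFunctor C 0).obj Y)⟦(1 : ℤ)⟧) :
    ∃ (E : C) (f : Y ⟶ E) (g : E ⟶ X),
      Triangle.mk ((singleFunctor C 0).map f) ((singleFunctor C 0).map g) δ ∈
        distTriang (DerivedCategory C) := by
  obtain ⟨Z, f, g, hT⟩ := distinguished_cocone_triangle₂ δ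
  have hGE : Z.IsGE 0 := TStructure.t.isGE₂ _ hT 0
    (inferInstanceAs (((singleFunctor C 0).obj Y).IsGE 0))
    (inferInstanceAs (((singleFunctor C 0).obj X).IsGE 0))
  have hLE : Z.IsLE 0 := TStructure.t.isLE₂ _ hT 0
    (inferInstanceAs (((singleFunctor C 0).obj Y).IsLE 0))
    (inferInstanceAs (((singleFunctor C 0).obj X).IsLE 0))
  obtain ⟨E, ⟨i⟩⟩ := exists_iso_singleFunctor_obj_of_isGE_of_isLE Z 0
  obtain ⟨f', hf⟩ := (singleFunctor C 0).map_surjective (f ≫ i.hom)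
  obtain ⟨g', hg⟩ := (singleFunctor C 0).map_surjective (i.inv ≫ g)
  exact ⟨E, f', g', isomorphic_distinguished _ hT _
    (Triangle.isoMk _ _ (Iso.refl _) i.symm (Iso.refl _)
      (((Iso.comp_inv_eq i).2 hf).trans (Category.id_comp f).symm)
      ((Category.comp_id _).trans hg)
      ((whisker_eq δ (CategoryTheory.Functor.map_id _ _)).trans
        ((Category.comp_id _).trans (Category.id_comp δ).symm)))⟩

end

variable [HasExt.{w} C]

theorem exists_shortExact_extClass_eq_s5 {X Y : C} (x : Abelian.Ext X Y 1) :
    ∃ (E : C) (f : Y ⟶ E) (g : E ⟶ X) (zero : f ≫ g = 0)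
      (h : (ShortComplex.mk f g zero).ShortExact), h.extClass = x := by
  let := HasDerivedCategory.standard C
  obtain ⟨E, f, g, hT⟩ := exists_singleFunctor_distinguished x.hom
  have zero : f ≫ g = 0 := (singleFunctor C 0).map_injective (by
    rw [Functor.map_comp, Functor.map_zero]
    exact comp_distTriang_mor_zero₁₂ _ hT)
  let S := ShortComplex.mk f g zero
  have hS : S.ShortExact := shortExact_of_singleFunctor_distinguished hT
  refine ⟨E, f, g, zero, hS, ?_⟩
  ext
  rw [hS.extClass_hom]
  exact singleδ_eq_of_singleFunctor_distinguished hS hT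

theorem exists_hom_of_extClass_comp_eq_s5 {S S' : ShortComplex C}
    (hS : S.ShortExact) (hS' : S'.ShortExact) (a : S.X₁ ⟶ S'.X₁) (c : S.X₃ ⟶ S'.X₃)
    (hac : hS.extClass.comp (Abelian.Ext.mk₀ a) (add_zero 1) =
      (Abelian.Ext.mk₀ c).comp hS'.extClass (zero_add 1)) :
    ∃ φ : S ⟶ S', φ.τ₁ = a ∧ φ.τ₃ = c := by
  let := HasDerivedCategory.standard C
  have hδ : hS.singleδ ≫ ((singleFunctor C 0).map a)⟦(1 : ℤ)⟧' =
      (singleFunctor C 0).map c ≫ hS'.singleδ := by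
    simpa [ShiftedHom.comp_mk₀, ShiftedHom.mk₀_comp] using!
      congr_arg Abelian.Ext.hom hac
  obtain ⟨b, hb₁, hb₂⟩ := complete_distinguished_triangle_morphism₂ _ _
    hS.singleTriangle_distinguished hS'.singleTriangle_distinguished
    ((singleFunctor C 0).map a) ((singleFunctor C 0).map c) hδ
  obtain ⟨b, rfl⟩ := (singleFunctor C 0).map_surjective b
  exact ⟨{ τ₁ := a, τ₂ := b, τ₃ := c
           comm₁₂ := (singleFunctor C 0).map_injective (by
             rw [Functor.map_comp, Functor.map_comp]
             exact hb₁.symm)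
           comm₂₃ := (singleFunctor C 0).map_injective (by
             rw [Functor.map_comp, Functor.map_comp]
             exact hb₂.symm) }, rfl, rfl⟩

end Extensions

section Hereditary

variable {C : Type u} [Category.{v} C] [Abelian C] [HasExt.{w} C]

theorem Hereditary.exists_isPushout (hher : Hereditary (𝒜 := C)) {X I Y : C}
    (p : X ⟶ I) [Epi p] (ι : I ⟶ Y) [Mono ι] :
    ∃ (E : C) (u : X ⟶ E) (v : E ⟶ Y), Mono u ∧ IsPushout u p v ι := by
  let S := ShortComplex.mk ι (cokernel.π ι) (cokernel.condition ι)
  have hS : S.ShortExact := { exact := ShortComplex.exact_cokernel ι }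
  let K := ShortComplex.mk (kernel.ι p) p (kernel.condition p)
  have hK : K.ShortExact := { exact := ShortComplex.exact_kernel p }
  obtain ⟨η, hη⟩ := Abelian.Ext.covariant_sequence_exact₃ (cokernel ι) hK hS.extClass rfl
    (hher _)
  obtain ⟨E, u, q, zero, hE, rfl⟩ := exists_shortExact_extClass_eq_s5 η
  obtain ⟨φ, hφ₁, hφ₃⟩ := exists_hom_of_extClass_comp_eq_s5 hE hS p (𝟙 _)
    (hη.trans (by simp))
  have : IsIso φ.τ₃ := by rw [hφ₃]; infer_instance
  have sq := isPushout_of_isIso_τ₃ hE hS φ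
  rw [hφ₁] at sq
  exact ⟨E, u, φ.τ₂, hE.mono_f, sq⟩

end Hereditary

section NarrowSubcategories

variable {C : Type u} [Category.{v} C] [Abelian C] {N : Set C}

theorem ClosedUnderExtensions.mem_of_mono (hN : ClosedUnderExtensions N) {X Y : C} (i : X ⟶ Y)
    [Mono i] (hX : X ∈ N) (hi : cokernel i ∈ N) : Y ∈ N :=
  hN (ShortComplex.mk i _ (cokernel.condition i)) { exact := ShortComplex.exact_cokernel i } hX hi

theorem ClosedUnderExtensions.of_mono (hrep : Replete N)
    (h : ∀ ⦃X Y : C⦄ (i : X ⟶ Y) [Mono i], X ∈ N → cokernel i ∈ N → Y ∈ N) :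
    ClosedUnderExtensions N := fun S hS h₁ h₃ ↦
  have := hS.mono_f
  h S.f h₁ (hrep h₃ (hS.gIsCokernel.coconePointUniqueUpToIso (colimit.isColimit _)))

theorem subset_wideClosure (N : Set C) : N ⊆ wideClosure N := fun _ hX _ _ hN ↦ hN hX

theorem isWide_wideClosure (N : Set C) : IsWide (wideClosure N) :=
  ⟨fun _ _ hX e W hW hN ↦ hW.1 (hX W hW hN) e,
    fun _ _ f hX hY W hW hN ↦ hW.2.1 f (hX W hW hN) (hY W hW hN),
    fun _ _ f hX hY W hW hN ↦ hW.2.2.1 f (hX W hW hN) (hY W hW hN),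
    fun S hS h₁ h₃ W hW hN ↦ hW.2.2.2 S hS (h₁ W hW hN) (h₃ W hW hN)⟩

/-- The kernels of the epimorphisms between objects of `N`, encoded as the objects `X` having a
monomorphism into an object of `N` whose cokernel is in `N`. -/
def kernelsOfEpis (N : Set C) : Set C :=
  {X | ∃ M ∈ N, ∃ i : X ⟶ M, Mono i ∧ cokernel i ∈ N}

theorem replete_kernelsOfEpis (hN : Replete N) : Replete (kernelsOfEpis N) := by
  rintro X Y ⟨M, hM, i, _, hi⟩ e
  exact ⟨M, hM, e.inv ≫ i, inferInstance, hN hi (cokernelEpiComp e.inv i).symm⟩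

namespace IsNarrow

theorem subset_kernelsOfEpis (hN : IsNarrow N) : N ⊆ kernelsOfEpis N := fun X hX ↦
  ⟨X, hX, 𝟙 X, inferInstance, hN.2.2 (𝟙 X) hX hX⟩

theorem src_mem_kernelsOfEpis (hN : IsNarrow N) {X E : C} (i : X ⟶ E) [Mono i]
    (hE : E ∈ kernelsOfEpis N) (hi : cokernel i ∈ N) : X ∈ kernelsOfEpis N := by
  obtain ⟨M, hM, j, _, hj⟩ := hE
  have sq := isPushout_cokernel_comp i j
  have := mono_of_isPushout_of_mono sq
  exact ⟨M, hM, i ≫ j, inferInstance,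
    hN.2.1.mem_of_mono _ hi (hN.1 hj (cokernelIsoOfIsPushout sq))⟩

theorem tgt_mem_kernelsOfEpis (hN : IsNarrow N) {X E : C} (i : X ⟶ E) [Mono i]
    (hX : X ∈ kernelsOfEpis N) (hi : cokernel i ∈ N) : E ∈ kernelsOfEpis N := by
  obtain ⟨M, hM, j, _, hj⟩ := hX
  have sq := IsPushout.of_hasPushout i j
  have hP : pushout i j ∈ N :=
    hN.2.1.mem_of_mono (pushout.inr i j) hM (hN.1 hi (cokernelIsoOfIsPushout sq))
  exact ⟨pushout i j, hP, pushout.inl i j, inferInstance,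
    hN.1 hj (cokernelIsoOfIsPushout sq.flip)⟩

theorem cokernel_mem_kernelsOfEpis_of_mem (hN : IsNarrow N) {M P : C} (r : M ⟶ P)
    (hM : M ∈ N) (hP : P ∈ kernelsOfEpis N) : cokernel r ∈ kernelsOfEpis N := by
  obtain ⟨L, hL, j, _, hj⟩ := hP
  have sq := isPushout_cokernel_comp r j
  have := mono_of_isPushout_of_mono sq
  exact ⟨cokernel (r ≫ j), hN.2.2 (r ≫ j) hM hL, _, this, hN.1 hj (cokernelIsoOfIsPushout sq)⟩

theorem closedUnderCokernels_kernelsOfEpis (hN : IsNarrow N) :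
    ClosedUnderCokernels (kernelsOfEpis N) := by
  rintro X Y f ⟨M, hM, i, _, hi⟩ hY
  have sq := IsPushout.of_hasPushout i f
  have hP : pushout i f ∈ kernelsOfEpis N :=
    hN.tgt_mem_kernelsOfEpis (pushout.inr i f) hY (hN.1 hi (cokernelIsoOfIsPushout sq))
  exact replete_kernelsOfEpis hN.1
    (hN.cokernel_mem_kernelsOfEpis_of_mem (pushout.inl i f) hM hP)
    (cokernelIsoOfIsPushout sq.flip).symm

variable [HasExt.{w} C]

theorem mem_of_epi_of_mono (hN : IsNarrow N) (hher : Hereditary (𝒜 := C)) {X I Y : C}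
    (p : X ⟶ I) [Epi p] (ι : I ⟶ Y) [Mono ι] (hX : X ∈ N) (hY : Y ∈ N) : I ∈ N := by
  obtain ⟨E, u, v, _, sq⟩ := hher.exists_isPushout p ι
  have hι : cokernel ι ∈ N := hN.1 (hN.2.2 (p ≫ ι) hX hY) (cokernelEpiComp p ι)
  have hE : E ∈ N := hN.2.1.mem_of_mono u hX (hN.1 hι (cokernelIsoOfIsPushout sq).symm)
  have hEI : (E ⊞ I) ∈ N := hN.2.1 _ (shortExact_shortComplex_of_isPushout sq) hX hY
  exact hN.1 (hN.2.2 biprod.inl hE hEI) cokernelBiprodInlIso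

theorem kernel_mem_kernelsOfEpis_of_mem (hN : IsNarrow N) (hher : Hereditary (𝒜 := C))
    {M P : C} (r : M ⟶ P) (hM : M ∈ N) (hP : P ∈ N) : kernel r ∈ kernelsOfEpis N :=
  ⟨M, hM, kernel.ι r, inferInstance,
    hN.mem_of_epi_of_mono hher (Abelian.coimage.π r) (Abelian.factorThruCoimage r) hM hP⟩

theorem closedUnderKernels_kernelsOfEpis (hN : IsNarrow N) (hher : Hereditary (𝒜 := C)) :
    ClosedUnderKernels (kernelsOfEpis N) := by
  rintro X Y f ⟨M, hM, i, _, hi⟩ ⟨L, hL, j, _, -⟩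
  have sq := IsPushout.of_hasPushout i (f ≫ j)
  have hP : pushout i (f ≫ j) ∈ N :=
    hN.2.1.mem_of_mono (pushout.inr _ _) hL (hN.1 hi (cokernelIsoOfIsPushout sq))
  have := isIso_kernel_map_of_isPushout_of_mono sq
  exact replete_kernelsOfEpis hN.1
    (hN.kernel_mem_kernelsOfEpis_of_mem hher (pushout.inl i (f ≫ j)) hM hP)
    ((asIso (kernel.map _ _ _ _ sq.w.symm)).symm ≪≫ kernelCompMono f j)

theorem closedUnderExtensions_kernelsOfEpis (hN : IsNarrow N) (hher : Hereditary (𝒜 := C)) :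
    ClosedUnderExtensions (kernelsOfEpis N) := by
  refine .of_mono (replete_kernelsOfEpis hN.1) fun X Y f _ hX ⟨L, hL, j, _, hj⟩ ↦ ?_
  obtain ⟨E, u, v, _, sq⟩ := hher.exists_isPushout (cokernel.π f) j
  have hfu : cokernel (f ≫ u) ∈ N :=
    hN.1 hL (sq.isoIsPushout _ _ (isPushout_cokernel_comp f u))
  have hE : E ∈ kernelsOfEpis N := hN.tgt_mem_kernelsOfEpis (f ≫ u) hX hfu
  exact hN.src_mem_kernelsOfEpis u hE (hN.1 hj (cokernelIsoOfIsPushout sq).symm)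

theorem isWide_kernelsOfEpis (hN : IsNarrow N) (hher : Hereditary (𝒜 := C)) :
    IsWide (kernelsOfEpis N) :=
  ⟨replete_kernelsOfEpis hN.1, hN.closedUnderKernels_kernelsOfEpis hher,
    hN.closedUnderCokernels_kernelsOfEpis, hN.closedUnderExtensions_kernelsOfEpis hher⟩

theorem exists_mono_of_mem_wideClosure (hN : IsNarrow N) (hher : Hereditary (𝒜 := C))
    {X : C} (hX : X ∈ wideClosure N) : ∃ M ∈ N, ∃ f : X ⟶ M, Mono f := by
  obtain ⟨M, hM, i, hi, -⟩ := hX _ (hN.isWide_kernelsOfEpis hher) hN.subset_kernelsOfEpis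
  exact ⟨M, hM, i, hi⟩

end IsNarrow

end NarrowSubcategories

theorem narrow_iff_tilting_nullity_class_in_wideClosure
    (hher : Hereditary (𝒜 := 𝒜)) (𝒩 : Set 𝒜) (hrep : Replete 𝒩) :
    (ClosedUnderExtensions 𝒩 ∧ ClosedUnderCokernels 𝒩) ↔
      ((∀ ⦃X Y : 𝒜⦄ (f : X ⟶ Y), Epi f → X ∈ 𝒩 → Y ∈ wideClosure 𝒩 → Y ∈ 𝒩) ∧
       (∀ S : ShortComplex 𝒜, S.ShortExact → S.X₁ ∈ 𝒩 → S.X₃ ∈ 𝒩 →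
          S.X₂ ∈ wideClosure 𝒩 → S.X₂ ∈ 𝒩) ∧
       (∀ W ∈ wideClosure 𝒩, ∃ X ∈ 𝒩, ∃ f : W ⟶ X, Mono f)) := by
  constructor
  · intro h
    have hN : IsNarrow 𝒩 := ⟨hrep, h⟩
    refine ⟨fun X Y f _ hX hY ↦ ?_, fun S hS h₁ h₃ _ ↦ h.1 S hS h₁ h₃,
      fun W hW ↦ hN.exists_mono_of_mem_wideClosure hher hW⟩
    obtain ⟨M, hM, j, _⟩ := hN.exists_mono_of_mem_wideClosure hher hY
    exact hN.mem_of_epi_of_mono hher f j hX hM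
  · rintro ⟨hquot, hext, -⟩
    have hsub := subset_wideClosure 𝒩
    obtain ⟨-, -, hcok, hext'⟩ := isWide_wideClosure 𝒩
    exact ⟨fun S hS h₁ h₃ ↦ hext S hS h₁ h₃ (hext' S hS (hsub h₁) (hsub h₃)),
      fun X Y f hX hY ↦ hquot (cokernel.π f) inferInstance hY (hcok f (hsub hX) (hsub hY))⟩
end
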